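/- Let g : ℂ² → ℂ² be differentiable over ℂ on all of ℂ². Suppose there exist four vectors v₁, v₂, v₃, v₄ ∈ ℂ², linearly independent over ℝ, and vectors w₁, w₂, w₃, w₄ ∈ ℂ² such that g(z + vⱼ) = g(z) + wⱼ for all z ∈ ℂ² and all j ∈ {1,2,3,4}. Then g is an affine transformation: for every z ∈ ℂ², g(z) = g(0) + (fderiv ℂ g 0)(z); in particular the derivative fderiv ℂ g z is the same continuous ℂ-linear map for every z. -/

import Mathlib

/-!
Modulo the periods of a function, the real line through a real-linear combination of periods lies in
a compact set. Hence if `u` and `I • u` both lie in the real span of the periods of an entire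
function, that function is bounded on every complex line in direction `u`, and Liouville's theorem
makes `u` itself a period. Quasi-periodicity of `g` says that the increments `z ↦ g (z + h) - g z`
are periodic; when the periods span, these increments are constant, so `g` has constant derivative.
-/

open Complex Set Submodule
open scoped Pointwise

/-- The group of periods of `f`, with `0` counted as a period. Its real span measures in how many
directions `f` is periodic. -/
def periods {E F : Type*} [AddGroup E] (f : E → F) : AddSubgroup E where
  carrier := {p | Function.Periodic f p}
  zero_mem' := Function.periodic_with_period_zero f
  add_mem' hp hq := hp.add_period hq
  neg_mem' hp := hp.neg

theorem exists_isCompact_forall_smul_mem_add {E : Type*} [AddCommGroup E] [Module ℝ E]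
    [TopologicalSpace E] [ContinuousAdd E] [ContinuousSMul ℝ E] (Λ : AddSubgroup E) {u : E}
    (hu : u ∈ span ℝ (Λ : Set E)) :
    ∃ K : Set E, IsCompact K ∧ ∀ t : ℝ, t • u ∈ K + (Λ : Set E) := by
  induction hu using span_induction with
  | mem p hp =>
    refine ⟨(· • p) '' Icc (0 : ℝ) 1, isCompact_Icc.image (by fun_prop), fun t ↦ ?_⟩
    refine ⟨Int.fract t • p, mem_image_of_mem _ ⟨Int.fract_nonneg t, (Int.fract_lt_one t).le⟩,
      ⌊t⌋ • p, Λ.zsmul_mem hp _, ?_⟩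
    change Int.fract t • p + ⌊t⌋ • p = t • p
    rw [← Int.cast_smul_eq_zsmul ℝ, ← add_smul, Int.fract_add_floor]
  | zero => exact ⟨{0}, isCompact_singleton, fun t ↦ by simp⟩
  | add u u' _ _ ih ih' =>
    obtain ⟨K, hK, hKu⟩ := ih
    obtain ⟨K', hK', hKu'⟩ := ih'
    refine ⟨K + K', hK.add hK', fun t ↦ ?_⟩
    have := add_mem_add (hKu t) (hKu' t)
    rwa [add_add_add_comm, coe_add_coe, ← smul_add] at this
  | smul c u _ ih =>
    obtain ⟨K, hK, hKu⟩ := ih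
    exact ⟨K, hK, fun t ↦ by simpa only [smul_smul] using hKu (t * c)⟩

theorem exists_isCompact_forall_complex_smul_mem_add {E : Type*} [AddCommGroup E] [Module ℂ E]
    [TopologicalSpace E] [ContinuousAdd E] [ContinuousSMul ℂ E] (Λ : AddSubgroup E) {u : E}
    (hu : u ∈ span ℝ (Λ : Set E)) (hIu : I • u ∈ span ℝ (Λ : Set E)) :
    ∃ K : Set E, IsCompact K ∧ ∀ t : ℂ, t • u ∈ K + (Λ : Set E) := by
  have : ContinuousSMul ℝ E := IsScalarTower.continuousSMul ℂ
  obtain ⟨K, hK, hKu⟩ := exists_isCompact_forall_smul_mem_add Λ hu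
  obtain ⟨K', hK', hKu'⟩ := exists_isCompact_forall_smul_mem_add Λ hIu
  refine ⟨K + K', hK.add hK', fun t ↦ ?_⟩
  have ht : t • u = t.re • u + t.im • I • u := by
    rw [← Complex.coe_smul, ← Complex.coe_smul, smul_smul, ← add_smul, re_add_im]
  have := add_mem_add (hKu t.re) (hKu' t.im)
  rwa [add_add_add_comm, coe_add_coe, ← ht] at this

theorem isBounded_range_line_of_mem_span_periods {E F : Type*} [AddCommGroup E] [Module ℂ E]
    [TopologicalSpace E] [ContinuousAdd E] [ContinuousSMul ℂ E] [PseudoMetricSpace F]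
    {f : E → F} (hf : Continuous f) {u : E} (hu : u ∈ span ℝ (periods f : Set E))
    (hIu : I • u ∈ span ℝ (periods f : Set E)) (x : E) :
    Bornology.IsBounded (range fun t : ℂ ↦ f (x + t • u)) := by
  obtain ⟨K, hK, hKu⟩ := exists_isCompact_forall_complex_smul_mem_add (periods f) hu hIu
  have himage : IsCompact ((fun k ↦ f (x + k)) '' K) := hK.image (by fun_prop)
  refine himage.isBounded.subset (range_subset_iff.2 fun t ↦ ?_)
  obtain ⟨k, hk, p, hp, hkp⟩ := mem_add.1 (hKu t)
  have hperiod : f (x + k + p) = f (x + k) := hp (x + k)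
  rw [← hkp, ← add_assoc, hperiod]
  exact mem_image_of_mem _ hk

section Entire

variable {E F : Type*} [NormedAddCommGroup E] [NormedSpace ℂ E]
  [NormedAddCommGroup F] [NormedSpace ℂ F] {f : E → F}

theorem periodic_of_mem_span_periods (hf : Differentiable ℂ f) {u : E}
    (hu : u ∈ span ℝ (periods f : Set E)) (hIu : I • u ∈ span ℝ (periods f : Set E)) :
    Function.Periodic f u := by
  intro x
  have hline : Differentiable ℂ fun t : ℂ ↦ f (x + t • u) := by fun_prop
  simpa using hline.apply_eq_apply_of_bounded
    (isBounded_range_line_of_mem_span_periods hf.continuous hu hIu x) 1 0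

theorem apply_eq_apply_of_span_periods_eq_top (hf : Differentiable ℂ f)
    (hspan : span ℝ (periods f : Set E) = ⊤) (x y : E) : f x = f y := by
  have hperiod : Function.Periodic f (x - y) :=
    periodic_of_mem_span_periods hf (hspan ▸ mem_top) (hspan ▸ mem_top)
  simpa using hperiod y

end Entire

theorem mem_periods_translate_sub_self {E F : Type*} [AddCommGroup E] [AddCommGroup F] {g : E → F}
    {v : E} {w : F} (hper : ∀ z, g (z + v) = g z + w) (h : E) :
    v ∈ periods fun z ↦ g (z + h) - g z := by
  intro z
  change g (z + v + h) - g (z + v) = g (z + h) - g z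
  rw [add_right_comm, hper, hper, add_sub_add_right_eq_sub]

section Affine

variable {𝕜 E F : Type*} [NontriviallyNormedField 𝕜] [NormedAddCommGroup E] [NormedSpace 𝕜 E]
  [NormedAddCommGroup F] [NormedSpace 𝕜 F] {g : E → F}

theorem fderiv_eq_of_translate_sub_self_eq (hinc : ∀ h z, g (z + h) - g z = g h - g 0) (z : E) :
    fderiv 𝕜 g z = fderiv 𝕜 g 0 := by
  have htranslate : (fun x ↦ g (x + z)) = fun x ↦ g x + (g z - g 0) := by
    funext x
    rw [← hinc z x, add_sub_cancel]
  calc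
    fderiv 𝕜 g z = fderiv 𝕜 (fun x ↦ g (x + z)) 0 := by rw [fderiv_comp_add_right, zero_add]
    _ = fderiv 𝕜 g 0 := by rw [htranslate, fderiv_add_const]

theorem eq_add_fderiv_of_fderiv_eq [IsRCLikeNormedField 𝕜] (hg : Differentiable 𝕜 g)
    (hconst : ∀ z, fderiv 𝕜 g z = fderiv 𝕜 g 0) (z : E) :
    g z = g 0 + fderiv 𝕜 g 0 z := by
  have haffine : Differentiable 𝕜 fun z ↦ g 0 + fderiv 𝕜 g 0 z := by fun_prop
  refine congrFun (eq_of_fderiv_eq hg haffine (fun x ↦ ?_) 0 (by simp)) z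
  rw [hconst x, fderiv_const_add, ContinuousLinearMap.fderiv]

end Affine

theorem entire_quasiperiodic_is_affine_general {ι E F : Type*} [NormedAddCommGroup E]
    [NormedSpace ℂ E] [NormedAddCommGroup F] [NormedSpace ℂ F] (g : E → F)
    (hg : Differentiable ℂ g) (v : ι → E) (hv : span ℝ (range v) = ⊤) (w : ι → F)
    (hper : ∀ z j, g (z + v j) = g z + w j) :
    (∀ z, g z = g 0 + fderiv ℂ g 0 z) ∧ ∀ z, fderiv ℂ g z = fderiv ℂ g 0 := by
  have hinc (h z : E) : g (z + h) - g z = g h - g 0 := by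
    have hdiff : Differentiable ℂ fun z ↦ g (z + h) - g z := by fun_prop
    have hsub : range v ⊆ periods fun z ↦ g (z + h) - g z :=
      range_subset_iff.2 fun j ↦ mem_periods_translate_sub_self (hper · j) h
    have hspan := top_unique (hv.ge.trans (span_mono hsub))
    simpa using apply_eq_apply_of_span_periods_eq_top hdiff hspan z 0
  have hconst := fderiv_eq_of_translate_sub_self_eq (𝕜 := ℂ) hinc
  exact ⟨eq_add_fderiv_of_fderiv_eq hg hconst, hconst⟩

/-- A holomorphic self-map of ℂ² that is quasi-periodic with respect to a full
real lattice (sends lattice translates to translates) is an affine transformation. -/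
theorem entire_quasiperiodic_is_affine
    (g : ℂ × ℂ → ℂ × ℂ) (hg : Differentiable ℂ g)
    (v : Fin 4 → ℂ × ℂ) (hv : LinearIndependent ℝ v)
    (w : Fin 4 → ℂ × ℂ)
    (hper : ∀ (z : ℂ × ℂ) (j : Fin 4), g (z + v j) = g z + w j) :
    (∀ z : ℂ × ℂ, g z = g 0 + fderiv ℂ g 0 z) ∧
      (∀ z : ℂ × ℂ, fderiv ℂ g z = fderiv ℂ g 0) :=
  entire_quasiperiodic_is_affine_general g hg v
    (hv.span_eq_top_of_card_eq_finrank (by simp [Complex.finrank_real_complex])) w hper
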